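/- Let D be a digraph with m arcs and minimum outdegree d ≥ 4, let X, Y be a partition of V(D) with e(X) = 0, set θ := min{|θ(X₁,X₂)| : X₁,X₂ a partition of X}, X' := {x ∈ X : s(x) ≥ θ}, g := Σ_{x∈X∖X'} s(x), and b := (1/2)·Σ_{x∈X}(d(x) − s(x)). Let ε > 0 and suppose every y ∈ Y satisfies d(y) ≤ ε²m/4. Then either there exists a bipartition V(D) = V₁ ∪ V₂ with min{e(V₁,V₂), e(V₂,V₁)} ≥ ((d−1)/(2(2d−1)) − ε)·m, or |X'| = 2k+1 for some integer k ≥ 0 and, writing X' = {v₁,…,v_{2k+1}} with Δⱼ := s(vⱼ) and Δ₁ ≥ Δ₂ ≥ … ≥ Δ_{2k+1}, one has d·(Σ_{j=1}^{k} Δⱼ + g) − (d−1)·Σ_{j=k+1}^{2k+1} Δⱼ + b + e(Y)/2 < 0. -/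

import Mathlib

open Finset

/-- Number of arcs of the digraph `A` directed from a vertex of `S` to a vertex of `T`. -/
def dArcs {V : Type} [Fintype V] [DecidableEq V] (A : V → V → Prop) [DecidableRel A]
    (S T : Finset V) : ℕ :=
  ((S ×ˢ T).filter fun p => A p.1 p.2).card

/-- Outdegree of `x`. -/
def outDeg {V : Type} [Fintype V] (A : V → V → Prop) [DecidableRel A] (x : V) : ℕ :=
  (Finset.univ.filter fun y => A x y).card

/-- Indegree of `x`. -/
def inDeg {V : Type} [Fintype V] (A : V → V → Prop) [DecidableRel A] (x : V) : ℕ :=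
  (Finset.univ.filter fun y => A y x).card

/-- Degree of `x`: outdegree plus indegree. -/
def deg {V : Type} [Fintype V] (A : V → V → Prop) [DecidableRel A] (x : V) : ℕ :=
  outDeg A x + inDeg A x

/-- `s(x) = max{d⁺(x) − d⁻(x), d⁻(x) − d⁺(x)}`. -/
def sVal {V : Type} [Fintype V] (A : V → V → Prop) [DecidableRel A] (x : V) : ℤ :=
  max ((outDeg A x : ℤ) - (inDeg A x : ℤ)) ((inDeg A x : ℤ) - (outDeg A x : ℤ))

/-- The gap `θ(X₁,X₂) = (e(X₁,Y)+e(Y,X₂)) − (e(X₂,Y)+e(Y,X₁))`. -/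
def gap {V : Type} [Fintype V] [DecidableEq V] (A : V → V → Prop) [DecidableRel A]
    (X₁ X₂ Y : Finset V) : ℤ :=
  ((dArcs A X₁ Y : ℤ) + (dArcs A Y X₂ : ℤ)) - ((dArcs A X₂ Y : ℤ) + (dArcs A Y X₁ : ℤ))

/-- If a number `t` keeps absolute value at least `θ` under all signed perturbations by weights
smaller than `θ`, then it exceeds `θ` by at least the total weight. -/
theorem add_sum_le_abs_of_small {V : Type*} [DecidableEq V] (s : V → ℤ) (θ : ℤ) (Z : Finset V)
    (h0 : ∀ x ∈ Z, 0 ≤ s x) (hlt : ∀ x ∈ Z, s x < θ) :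
    ∀ t : ℤ, (∀ P ⊆ Z, θ ≤ |t + 2 * ∑ x ∈ P, s x - ∑ x ∈ Z, s x|) →
      θ + ∑ x ∈ Z, s x ≤ |t| := by
  induction Z using Finset.induction_on with
  | empty => intro t h; simpa using h ∅ (by simp)
  | insert z Z hz ih =>
    intro t h
    have ih' := ih (fun x hx => h0 x (mem_insert_of_mem hx))
      (fun x hx => hlt x (mem_insert_of_mem hx))
    have hplus := ih' (t + s z) (by
      intro P hP
      have := h (insert z P) (insert_subset_insert z hP)
      rw [sum_insert hz, sum_insert (fun hc => hz (hP hc))] at this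
      convert this using 2; ring)
    have hminus := ih' (t - s z) (by
      intro P hP
      have := h P (hP.trans (subset_insert z Z))
      rw [sum_insert hz] at this
      convert this using 2; ring)
    have hs0 := h0 z (mem_insert_self z Z)
    have hs1 := hlt z (mem_insert_self z Z)
    have hnn : 0 ≤ ∑ x ∈ Z, s x := sum_nonneg fun x hx => h0 x (mem_insert_of_mem hx)
    rw [sum_insert hz]
    rcases abs_cases t with ht | ht <;> rcases abs_cases (t + s z) with h1 | h1 <;>
      rcases abs_cases (t - s z) with h2 | h2 <;> omega

/-- An even number of weights in `[θ, 2θ)` admits a signed sum of absolute value below `θ`. -/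
theorem exists_abs_signed_sum_lt_of_even {V : Type*} [DecidableEq V] (s : V → ℤ) (θ : ℤ)
    (hθ : 0 < θ) (n : ℕ) : ∀ Z : Finset V, Z.card = 2 * n → (∀ x ∈ Z, θ ≤ s x ∧ s x < 2 * θ) →
      ∃ P ⊆ Z, |2 * ∑ x ∈ P, s x - ∑ x ∈ Z, s x| < θ := by
  induction n with
  | zero =>
    intro Z hZ _
    have : Z = ∅ := by simpa using hZ
    subst this
    exact ⟨∅, by simp, by simpa using hθ⟩
  | succ n ih =>
    intro Z hZ hs
    obtain ⟨a, Z₁, ha, rfl, hZ₁⟩ := card_eq_succ.mp (show Z.card = (2 * n + 1) + 1 by omega)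
    obtain ⟨b, Z₂, hb, rfl, hZ₂⟩ := card_eq_succ.mp hZ₁
    obtain ⟨P, hP, hlt⟩ := ih Z₂ hZ₂ (fun x hx => hs x (by simp [hx]))
    have hab := hs a (by simp)
    have hbb := hs b (by simp)
    have haP : a ∉ P := fun hc => ha (mem_insert_of_mem (hP hc))
    have hbP : b ∉ P := fun hc => hb (hP hc)
    rw [sum_insert ha, sum_insert hb]
    rcases abs_cases (2 * ∑ x ∈ P, s x - ∑ x ∈ Z₂, s x) with h1 | h1 <;>
      rcases le_total (s a) (s b) with h2 | h2
    · refine ⟨insert a P, insert_subset_insert _ (hP.trans (subset_insert _ _)), ?_⟩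
      rw [sum_insert haP, abs_lt]; omega
    · refine ⟨insert b P, (insert_subset_insert _ hP).trans (subset_insert _ _), ?_⟩
      rw [sum_insert hbP, abs_lt]; omega
    · refine ⟨insert b P, (insert_subset_insert _ hP).trans (subset_insert _ _), ?_⟩
      rw [sum_insert hbP, abs_lt]; omega
    · refine ⟨insert a P, insert_subset_insert _ (hP.trans (subset_insert _ _)), ?_⟩
      rw [sum_insert haP, abs_lt]; omega

/-- For an antitone sequence of `2k+1` weights in `[θ, 2θ)`, all of whose signed sums have absolute
value at least `c ≥ θ`, the `k+1` smallest weights exceed the `k` largest ones by at least `c`. -/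
theorem le_sum_small_sub_sum_large (a : ℕ → ℤ) (k : ℕ) (θ c : ℤ) (hθ : 0 < θ) (hc : θ ≤ c)
    (ha : ∀ j ∈ Icc 1 (2 * k + 1), θ ≤ a j ∧ a j < 2 * θ)
    (hanti : ∀ i ∈ Icc 1 (2 * k + 1), ∀ j ∈ Icc 1 (2 * k + 1), i ≤ j → a j ≤ a i)
    (hP : ∀ P ⊆ Icc 1 (2 * k + 1), c ≤ |2 * ∑ j ∈ P, a j - ∑ j ∈ Icc 1 (2 * k + 1), a j|) :
    c ≤ ∑ j ∈ Icc (k + 1) (2 * k + 1), a j - ∑ j ∈ Icc 1 k, a j := by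
  have htot : ∑ j ∈ Icc 1 (2 * k + 1), a j =
      ∑ j ∈ Ico 1 (k + 1), a j + ∑ j ∈ Ico (k + 1) (2 * k + 2), a j := by
    rw [sum_Ico_consecutive _ (by omega) (by omega)]; rfl
  have htot' : ∑ j ∈ Icc 1 (2 * k + 1), a j =
      ∑ j ∈ Ico 1 (k + 2), a j + ∑ j ∈ Ico (k + 2) (2 * k + 2), a j := by
    rw [sum_Ico_consecutive _ (by omega) (by omega)]; rfl
  have key : ∀ i ≤ k, c ≤ 2 * ∑ j ∈ Ico (i + 1) (i + k + 2), a j -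
      ∑ j ∈ Icc 1 (2 * k + 1), a j := by
    intro i
    induction i with
    | zero =>
      intro _
      have hle : ∑ j ∈ Ico (k + 2) (2 * k + 2), a j ≤ ∑ j ∈ Ico 1 (k + 1), a j := by
        rw [sum_Ico_eq_sum_range, sum_Ico_eq_sum_range,
          show 2 * k + 2 - (k + 2) = k by omega, show k + 1 - 1 = k by omega]
        refine sum_le_sum fun j hj => ?_
        rw [mem_range] at hj
        exact hanti _ (by rw [mem_Icc]; omega) _ (by rw [mem_Icc]; omega) (by omega)
      have h1 : ∑ j ∈ Ico 1 (k + 2), a j = ∑ j ∈ Ico 1 (k + 1), a j + a (k + 1) :=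
        sum_Ico_succ_top (show 1 ≤ k + 1 by omega) a
      have h2 := (ha (k + 1) (by rw [mem_Icc]; omega)).1
      have h3 := hP (Ico 1 (k + 2)) (by intro j; simp only [mem_Icc, mem_Ico]; omega)
      rw [abs_of_nonneg (by omega)] at h3
      simpa using h3
    | succ i ih =>
      intro hi
      have h0 := ih (by omega)
      have h1 := sum_Ico_succ_top (show i + 2 ≤ i + k + 2 by omega) a
      have h2 := sum_eq_sum_Ico_succ_bot (show i + 1 < i + k + 2 by omega) a
      have h3 := (ha (i + 1) (by rw [mem_Icc]; omega)).2
      have h4 := (ha (i + k + 2) (by rw [mem_Icc]; omega)).1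
      have h5 := hP (Ico (i + 2) (i + k + 2 + 1)) (by
        intro j; simp only [mem_Icc, mem_Ico]; omega)
      rw [show i + 1 + k + 2 = i + k + 2 + 1 by omega]
      simp only [add_assoc, Nat.reduceAdd] at *
      rcases abs_cases (2 * ∑ j ∈ Ico (i + 2) (i + (k + 3)), a j -
        ∑ j ∈ Icc 1 (2 * k + 1), a j) with h6 | h6 <;> omega
  have hk := key k le_rfl
  have e1 : ∑ j ∈ Icc (k + 1) (2 * k + 1), a j = ∑ j ∈ Ico (k + 1) (k + k + 2), a j := by
    rw [← two_mul]; rfl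
  have e2 : ∑ j ∈ Icc 1 k, a j = ∑ j ∈ Ico 1 (k + 1), a j := rfl
  rw [show k + k + 2 = 2 * k + 2 by omega] at *
  omega

/-- Efron–Stein inequality for a uniformly random subset of `Y`. -/
theorem sum_powerset_sq_sub_mean_le {V : Type*} [DecidableEq V] (c : V → ℝ) (Y : Finset V) :
    ∀ (f : Finset V → ℝ) (μ : ℝ), ∑ S ∈ Y.powerset, f S = 2 ^ Y.card * μ →
      (∀ y ∈ Y, ∀ S, y ∉ S → |f (insert y S) - f S| ≤ c y) →
      ∑ S ∈ Y.powerset, (f S - μ) ^ 2 ≤ 2 ^ Y.card * ((∑ y ∈ Y, c y ^ 2) / 4) := by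
  induction Y using Finset.induction_on with
  | empty =>
    intro f μ h _
    simp at h
    simp [h]
  | insert y Y hy ih =>
    intro f μ hμ hf
    rw [sum_powerset_insert hy, card_insert_of_notMem hy, pow_succ] at hμ
    have hih := ih (fun S => (f S + f (insert y S)) / 2) μ
      (by rw [← sum_div, sum_add_distrib, hμ]; ring)
      (by
        intro z hz S hzS
        have hzy : z ≠ y := fun h => hy (h ▸ hz)
        have h1 := abs_le.mp (hf z (mem_insert_of_mem hz) S hzS)
        have h2 := abs_le.mp (hf z (mem_insert_of_mem hz) (insert y S) (by simp [hzy, hzS]))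
        rw [insert_comm] at h2
        rw [abs_le]
        constructor <;> linarith)
    have hsq : ∑ S ∈ Y.powerset, (f (insert y S) - f S) ^ 2 ≤ 2 ^ Y.card * c y ^ 2 := by
      have h := sum_le_card_nsmul Y.powerset (fun S => (f (insert y S) - f S) ^ 2) (c y ^ 2) (by
        intro S hS
        have hyS : y ∉ S := fun hc => hy (mem_powerset.mp hS hc)
        exact sq_le_sq' (abs_le.mp (hf y (mem_insert_self y Y) S hyS)).1
          (abs_le.mp (hf y (mem_insert_self y Y) S hyS)).2)
      rwa [card_powerset, nsmul_eq_mul, Nat.cast_pow, Nat.cast_ofNat] at h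
    rw [sum_powerset_insert hy, card_insert_of_notMem hy, pow_succ, sum_insert hy,
      ← sum_add_distrib]
    have hpt : ∀ S ∈ Y.powerset, (f S - μ) ^ 2 + (f (insert y S) - μ) ^ 2 =
        2 * ((f S + f (insert y S)) / 2 - μ) ^ 2 + (f (insert y S) - f S) ^ 2 / 2 := by
      intro S _; ring
    rw [sum_congr rfl hpt, sum_add_distrib, ← mul_sum, ← sum_div]
    linarith

/-- Probability that `u` lies in `Q ∪ S` for a uniformly random `S ⊆ Y`, with `Q`, `Y` disjoint. -/
noncomputable def halfWeight {V : Type*} [DecidableEq V] (Q Y : Finset V) (u : V) : ℝ :=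
  if u ∈ Q then 1 else if u ∈ Y then 1 / 2 else 0

theorem sum_powerset_separates {V : Type*} [DecidableEq V] {u v : V} (huv : u ≠ v)
    (Y : Finset V) : ∀ Q : Finset V, Disjoint Q Y →
      ∑ S ∈ Y.powerset, (if u ∈ Q ∪ S ∧ v ∉ Q ∪ S then (1 : ℝ) else 0) =
        2 ^ Y.card * (halfWeight Q Y u * (1 - halfWeight Q Y v)) := by
  induction Y using Finset.induction_on with
  | empty =>
    intro Q _
    by_cases hu : u ∈ Q <;> by_cases hv : v ∈ Q <;> simp [halfWeight, hu, hv]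
  | insert y Y hy ih =>
    intro Q hQ
    rw [disjoint_insert_right] at hQ
    have h1 := ih Q hQ.2
    have h2 := ih (insert y Q) (by rw [disjoint_insert_left]; exact ⟨hy, hQ.2⟩)
    rw [sum_powerset_insert hy, h1, card_insert_of_notMem hy, pow_succ]
    simp only [insert_union] at h2
    simp only [union_insert]
    rw [h2]
    have hdisj : ∀ w, w ∈ Q → w ∉ Y := fun w hw hw' => disjoint_left.mp hQ.2 hw hw'
    rw [← mul_add, mul_assoc]
    congr 1
    by_cases huy : u = y
    · subst huy
      have hvu : v ≠ u := fun h => huv h.symm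
      simp only [halfWeight, mem_insert, hvu, hQ.1, hy, false_or, true_or, if_true, if_false]
      ring
    · by_cases hvy : v = y
      · subst hvy
        simp only [halfWeight, mem_insert, huy, hQ.1, hy, false_or, true_or, if_true, if_false]
        ring
      · simp only [halfWeight, mem_insert, huy, hvy, false_or]
        ring

theorem sVal_nonneg {V : Type} [Fintype V] (A : V → V → Prop) [DecidableRel A] (x : V) :
    0 ≤ sVal A x := by
  unfold sVal; omega

section Arcs

variable {V : Type} [Fintype V] [DecidableEq V] (A : V → V → Prop) [DecidableRel A]

theorem dArcs_eq_sum (S T : Finset V) :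
    (dArcs A S T : ℝ) =
      ∑ p : V × V with A p.1 p.2, if p.1 ∈ S ∧ p.2 ∈ T then (1 : ℝ) else 0 := by
  rw [sum_boole, dArcs, filter_filter]
  congr 2
  ext p
  simp [and_comm]

theorem dArcs_eq_sum_outDeg (S : Finset V) : dArcs A S univ = ∑ x ∈ S, outDeg A x := by
  simp only [dArcs, outDeg, card_filter, sum_product]

theorem dArcs_eq_sum_inDeg (T : Finset V) : dArcs A univ T = ∑ x ∈ T, inDeg A x := by
  simp only [dArcs, inDeg, card_filter, sum_product_right]

theorem dArcs_union_right (S : Finset V) {T U : Finset V} (h : Disjoint T U) :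
    dArcs A S (T ∪ U) = dArcs A S T + dArcs A S U := by
  simp only [dArcs, card_filter, sum_product, sum_union h, sum_add_distrib]

theorem dArcs_union_left {S T : Finset V} (h : Disjoint S T) (U : Finset V) :
    dArcs A (S ∪ T) U = dArcs A S U + dArcs A T U := by
  simp only [dArcs, card_filter, sum_product, sum_union h]

theorem dArcs_mono {S S' T T' : Finset V} (hS : S ⊆ S') (hT : T ⊆ T') :
    dArcs A S T ≤ dArcs A S' T' :=
  card_le_card (filter_subset_filter _ (product_subset_product hS hT))

theorem mul_outDeg_le {d : ℕ} (hout : ∀ x, d ≤ outDeg A x) (x : V) :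
    d * outDeg A x ≤ dArcs A univ univ := by
  refine le_trans ?_ (dArcs_mono A (subset_univ (univ.filter fun y => A x y)) subset_rfl)
  rw [dArcs_eq_sum_outDeg, mul_comm, outDeg, ← smul_eq_mul]
  exact card_nsmul_le_sum _ _ _ fun y _ => hout y

theorem mul_inDeg_le {d : ℕ} (hout : ∀ x, d ≤ outDeg A x) (x : V) :
    d * inDeg A x ≤ dArcs A univ univ := by
  refine le_trans ?_ (dArcs_mono A (subset_univ (univ.filter fun y => A y x)) subset_rfl)
  rw [dArcs_eq_sum_outDeg, mul_comm, inDeg, ← smul_eq_mul]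
  exact card_nsmul_le_sum _ _ _ fun y _ => hout y

theorem mul_sVal_le {d : ℕ} (hout : ∀ x, d ≤ outDeg A x) (x : V) :
    (d : ℤ) * sVal A x ≤ dArcs A univ univ := by
  have h1 : (d : ℤ) * outDeg A x ≤ dArcs A univ univ := mod_cast mul_outDeg_le A hout x
  have h2 : (d : ℤ) * inDeg A x ≤ dArcs A univ univ := mod_cast mul_inDeg_le A hout x
  have h3 : sVal A x ≤ outDeg A x ∨ sVal A x ≤ inDeg A x := by unfold sVal; omega
  rcases h3 with h | h
  · exact (mul_le_mul_of_nonneg_left h (by positivity)).trans h1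
  · exact (mul_le_mul_of_nonneg_left h (by positivity)).trans h2

theorem sum_arcs_incident (y : V) :
    ∑ p : V × V with A p.1 p.2,
      ((if p.1 = y then (1 : ℝ) else 0) + if p.2 = y then (1 : ℝ) else 0) = deg A y := by
  have h1 := dArcs_eq_sum A {y} univ
  have h2 := dArcs_eq_sum A univ {y}
  rw [dArcs_eq_sum_outDeg] at h1
  rw [dArcs_eq_sum_inDeg] at h2
  simp only [sum_singleton, mem_singleton, mem_univ, and_true, true_and] at h1 h2
  rw [sum_add_distrib, ← h1, ← h2, deg, Nat.cast_add]

theorem abs_cut_insert_sub_le (y : V) (P : Finset V) :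
    |(dArcs A (insert y P) (insert y P)ᶜ : ℝ) - dArcs A P Pᶜ| ≤ deg A y ∧
    |(dArcs A (insert y P)ᶜ (insert y P) : ℝ) - dArcs A Pᶜ P| ≤ deg A y := by
  simp only [dArcs_eq_sum, ← sum_sub_distrib, ← sum_arcs_incident A y]
  constructor <;>
  · refine (abs_sum_le_sum_abs _ _).trans (sum_le_sum fun p _ => ?_)
    by_cases h1 : p.1 = y <;> by_cases h2 : p.2 = y <;> by_cases h3 : p.1 ∈ P <;>
      by_cases h4 : p.2 ∈ P <;> simp [h1, h2, h3, h4]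
    all_goals split_ifs <;> norm_num

/-- The average cut sizes when `Y` is split uniformly at random. -/
theorem sum_powerset_cut (hirr : ∀ v, ¬ A v v) {X Y : Finset V} (hXY : X ∪ Y = univ)
    (hdXY : Disjoint X Y) (heX : dArcs A X X = 0) {X₁ : Finset V} (hX₁ : X₁ ⊆ X) :
    ∑ S ∈ Y.powerset, (dArcs A (X₁ ∪ S) (X₁ ∪ S)ᶜ : ℝ) =
      2 ^ Y.card * (((dArcs A X₁ Y : ℝ) + dArcs A Y (X \ X₁)) / 2 + (dArcs A Y Y : ℝ) / 4) ∧
    ∑ S ∈ Y.powerset, (dArcs A (X₁ ∪ S)ᶜ (X₁ ∪ S) : ℝ) =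
      2 ^ Y.card * (((dArcs A (X \ X₁) Y : ℝ) + dArcs A Y X₁) / 2 + (dArcs A Y Y : ℝ) / 4) := by
  have hd₁ : Disjoint X₁ Y := disjoint_of_subset_left hX₁ hdXY
  have hX0 : ∀ u v, A u v → ¬ (u ∈ X ∧ v ∈ X) := by
    intro u v huv h
    rw [dArcs, card_eq_zero] at heX
    have : (u, v) ∈ (X ×ˢ X).filter fun p => A p.1 p.2 := by simp [huv, h]
    simp [heX] at this
  have hcov : ∀ u, u ∈ X ∨ u ∈ Y := fun u => by
    have := mem_univ u
    rwa [← hXY, mem_union] at this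
  have hdj : ∀ u, u ∈ X → u ∉ Y := fun u h h' => disjoint_left.mp hdXY h h'
  have hne : ∀ u v, A u v → u ≠ v := fun u v h e => hirr v (e ▸ h)
  simp only [dArcs_eq_sum, mem_compl]
  constructor <;>
  · rw [sum_comm, sum_div, ← sum_add_distrib, sum_div, ← sum_add_distrib, mul_sum]
    refine sum_congr rfl fun p hp => ?_
    have hA : A p.1 p.2 := (mem_filter.mp hp).2
    have hpe := hne _ _ hA
    have hpX := hX0 _ _ hA
    have hq1 := @hX₁ p.1
    have hq2 := @hX₁ p.2
    have c1 := hcov p.1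
    have c2 := hcov p.2
    have j1 := hdj p.1
    have j2 := hdj p.2
    have i1 := fun h h' => hdj p.1 h' h
    have i2 := fun h h' => hdj p.2 h' h
    have e1 := sum_powerset_separates hpe Y X₁ hd₁
    have e2 := sum_powerset_separates hpe.symm Y X₁ hd₁
    first | rw [e1] | (simp only [and_comm (a := p.1 ∉ _)]; rw [e2])
    clear e1 e2
    congr 1
    unfold halfWeight
    by_cases a1 : p.1 ∈ X₁ <;> by_cases a2 : p.2 ∈ X₁ <;> by_cases a3 : p.1 ∈ Y <;>
      by_cases a4 : p.2 ∈ Y <;> simp_all <;> norm_num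

/-- A balanced-in-expectation split of `X` extends to a bipartition whose two cuts are both large. -/
theorem exists_large_cuts (hirr : ∀ v, ¬ A v v) {X Y : Finset V} (hXY : X ∪ Y = univ)
    (hdXY : Disjoint X Y) (heX : dArcs A X X = 0) {X₁ : Finset V} (hX₁ : X₁ ⊆ X)
    {m : ℕ} (hm : m = dArcs A univ univ) {ε L : ℝ} (hε : 0 < ε)
    (hdeg : ∀ y ∈ Y, (deg A y : ℝ) ≤ ε ^ 2 * m / 4)
    (hL : L ≤ ((m : ℝ) - |(gap A X₁ (X \ X₁) Y : ℝ)|) / 4) :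
    ∃ P : Finset V, L - ε * m ≤ min (dArcs A P Pᶜ : ℝ) (dArcs A Pᶜ P : ℝ) := by
  obtain ⟨hμ₁, hμ₂⟩ := sum_powerset_cut A hirr hXY hdXY heX hX₁
  set μ₁ := ((dArcs A X₁ Y : ℝ) + dArcs A Y (X \ X₁)) / 2 + (dArcs A Y Y : ℝ) / 4 with hdef₁
  set μ₂ := ((dArcs A (X \ X₁) Y : ℝ) + dArcs A Y X₁) / 2 + (dArcs A Y Y : ℝ) / 4 with hdef₂
  have hsplit : (m : ℝ) = dArcs A X₁ Y + dArcs A Y (X \ X₁) + dArcs A (X \ X₁) Y +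
      dArcs A Y X₁ + dArcs A Y Y := by
    have h1 : m = dArcs A X X + dArcs A Y X + (dArcs A X Y + dArcs A Y Y) := by
      rw [hm, ← hXY, dArcs_union_right _ _ hdXY, dArcs_union_left _ hdXY,
        dArcs_union_left _ hdXY]
    have hX : X₁ ∪ X \ X₁ = X := union_sdiff_of_subset hX₁
    have h2 : dArcs A Y X = dArcs A Y X₁ + dArcs A Y (X \ X₁) := by
      rw [← dArcs_union_right _ _ disjoint_sdiff, hX]
    have h3 : dArcs A X Y = dArcs A X₁ Y + dArcs A (X \ X₁) Y := by
      rw [← dArcs_union_left _ disjoint_sdiff, hX]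
    have h4 : m = dArcs A X₁ Y + dArcs A Y (X \ X₁) + dArcs A (X \ X₁) Y +
      dArcs A Y X₁ + dArcs A Y Y := by omega
    exact_mod_cast h4
  have hgap : (gap A X₁ (X \ X₁) Y : ℝ) = 2 * (μ₁ - μ₂) := by
    rw [gap, hdef₁, hdef₂]; push_cast; ring
  have hμ : (m : ℝ) = 2 * (μ₁ + μ₂) := by rw [hsplit, hdef₁, hdef₂]; ring
  have habs := le_abs_self (gap A X₁ (X \ X₁) Y : ℝ)
  have habs' := neg_abs_le (gap A X₁ (X \ X₁) Y : ℝ)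
  have hL₁ : L ≤ μ₁ := by linarith
  have hL₂ : L ≤ μ₂ := by linarith
  rcases Nat.eq_zero_or_pos m with hm0 | hmpos
  · refine ⟨∅, ?_⟩
    have h1 : (0 : ℝ) ≤ dArcs A ∅ (∅ : Finset V)ᶜ := by positivity
    have h2 : (0 : ℝ) ≤ dArcs A (∅ : Finset V)ᶜ ∅ := by positivity
    have h3 := abs_nonneg (gap A X₁ (X \ X₁) Y : ℝ)
    rw [hm0] at hL ⊢
    rw [le_min_iff]
    constructor <;> push_cast at * <;> linarith
  have hmR : (0 : ℝ) < m := by exact_mod_cast hmpos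
  by_contra! hcon
  have hv₁ := sum_powerset_sq_sub_mean_le (fun y => (deg A y : ℝ)) Y _ μ₁ hμ₁ (by
    intro y _ S _
    rw [union_insert]
    exact (abs_cut_insert_sub_le A y _).1)
  have hv₂ := sum_powerset_sq_sub_mean_le (fun y => (deg A y : ℝ)) Y _ μ₂ hμ₂ (by
    intro y _ S _
    rw [union_insert]
    exact (abs_cut_insert_sub_le A y _).2)
  have hlow : ∑ _S ∈ Y.powerset, (ε * m) ^ 2 ≤ ∑ S ∈ Y.powerset,
      (((dArcs A (X₁ ∪ S) (X₁ ∪ S)ᶜ : ℝ) - μ₁) ^ 2 +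
        ((dArcs A (X₁ ∪ S)ᶜ (X₁ ∪ S) : ℝ) - μ₂) ^ 2) := by
    refine sum_le_sum fun S _ => ?_
    have hεm : 0 < ε * m := by positivity
    rcases min_lt_iff.mp (hcon (X₁ ∪ S)) with h | h
    · refine le_add_of_le_of_nonneg ?_ (sq_nonneg _)
      rw [← neg_sq (_ - _)]
      exact pow_le_pow_left₀ hεm.le (by linarith) 2
    · refine le_add_of_nonneg_of_le (sq_nonneg _) ?_
      rw [← neg_sq (_ - _)]
      exact pow_le_pow_left₀ hεm.le (by linarith) 2
  rw [sum_add_distrib, sum_const, card_powerset, nsmul_eq_mul] at hlow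
  push_cast at hlow
  have hdegsum : ∑ y ∈ Y, (deg A y : ℝ) ≤ 2 * m := by
    have h1 : ∑ y, deg A y = 2 * m := by
      simp only [deg, sum_add_distrib, ← dArcs_eq_sum_outDeg, ← dArcs_eq_sum_inDeg, ← hm]
      ring
    have h2 : ∑ y ∈ Y, deg A y ≤ ∑ y, deg A y := sum_le_sum_of_subset (subset_univ Y)
    rw [h1] at h2
    exact_mod_cast h2
  have hsq : ∑ y ∈ Y, (deg A y : ℝ) ^ 2 ≤ ε ^ 2 * m / 4 * (2 * m) := by
    calc ∑ y ∈ Y, (deg A y : ℝ) ^ 2 ≤ ∑ y ∈ Y, ε ^ 2 * m / 4 * (deg A y : ℝ) := by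
          refine sum_le_sum fun y hy => ?_
          rw [sq]
          exact mul_le_mul_of_nonneg_right (hdeg y hy) (by positivity)
      _ = ε ^ 2 * m / 4 * ∑ y ∈ Y, (deg A y : ℝ) := by rw [mul_sum]
      _ ≤ _ := mul_le_mul_of_nonneg_left hdegsum (by positivity)
  have h2pow : (0 : ℝ) < 2 ^ Y.card := by positivity
  have hfin : (2 : ℝ) ^ Y.card * (ε * m) ^ 2 ≤
      2 ^ Y.card * ((∑ y ∈ Y, (deg A y : ℝ) ^ 2) / 2) := by linarith
  have := le_of_mul_le_mul_left hfin h2pow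
  have hpos : 0 < (ε * m) ^ 2 := by positivity
  nlinarith

/-- Every signed sum of the values `s(x)` over `X` is realised as a gap. -/
theorem exists_gap_eq {X Y : Finset V} (hXY : X ∪ Y = univ) (hdXY : Disjoint X Y)
    (heX : dArcs A X X = 0) {P : Finset V} (hP : P ⊆ X) :
    ∃ X₁ ⊆ X, gap A X₁ (X \ X₁) Y = 2 * ∑ x ∈ P, sVal A x - ∑ x ∈ X, sVal A x := by
  have hoY : ∀ S ⊆ X, dArcs A S Y = ∑ x ∈ S, outDeg A x := by
    intro S hS
    have h := dArcs_union_right A S hdXY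
    have h0 := dArcs_mono A hS (subset_refl X)
    rw [hXY, dArcs_eq_sum_outDeg] at h
    omega
  have hiY : ∀ S ⊆ X, dArcs A Y S = ∑ x ∈ S, inDeg A x := by
    intro S hS
    have h := dArcs_union_left A hdXY S
    have h0 := dArcs_mono A (subset_refl X) hS
    rw [hXY, dArcs_eq_sum_inDeg] at h
    omega
  refine ⟨X.filter fun x => (x ∈ P ↔ inDeg A x ≤ outDeg A x), filter_subset _ _, ?_⟩
  rw [gap, hoY _ (filter_subset _ _), hoY _ sdiff_subset, hiY _ (filter_subset _ _),
    hiY _ sdiff_subset, ← filter_not]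
  push_cast
  have hPX : ∑ x ∈ P, sVal A x = ∑ x ∈ X, if x ∈ P then sVal A x else 0 := by
    rw [← sum_filter]
    congr 1
    ext x
    simp only [mem_filter]
    exact ⟨fun h => ⟨hP h, h⟩, fun h => h.2⟩
  rw [hPX]
  simp only [sum_filter, mul_sum, ← sum_sub_distrib, ← sum_add_distrib]
  refine sum_congr rfl fun x _ => ?_
  unfold sVal
  by_cases h1 : x ∈ P <;> by_cases h2 : inDeg A x ≤ outDeg A x <;> simp [h1, h2] <;> omega

theorem dArcs_univ_eq_sum_deg_add {X Y : Finset V} (hXY : X ∪ Y = univ) (hdXY : Disjoint X Y)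
    (heX : dArcs A X X = 0) : dArcs A univ univ = ∑ x ∈ X, deg A x + dArcs A Y Y := by
  have h1 : dArcs A univ univ = dArcs A X X + dArcs A Y X + (dArcs A X Y + dArcs A Y Y) := by
    rw [← hXY, dArcs_union_right _ _ hdXY, dArcs_union_left _ hdXY, dArcs_union_left _ hdXY]
  have h2 := dArcs_union_right A X hdXY
  have h3 := dArcs_union_left A hdXY X
  rw [hXY, dArcs_eq_sum_outDeg] at h2
  rw [hXY, dArcs_eq_sum_inDeg] at h3
  simp only [deg, sum_add_distrib]
  omega

end Arcs

/-- Lemma 3.2(1). -/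
theorem stmt8 {V : Type} [Fintype V] [DecidableEq V] (A : V → V → Prop) [DecidableRel A]
    (hirr : ∀ v, ¬ A v v)
    (m : ℕ) (hm : m = dArcs A Finset.univ Finset.univ)
    (d : ℕ) (hd : 4 ≤ d) (hout : ∀ x, d ≤ outDeg A x)
    (X Y : Finset V) (hXY : X ∪ Y = Finset.univ) (hdXY : Disjoint X Y)
    (heX : dArcs A X X = 0)
    (θ : ℤ) (hθ : IsLeast {t : ℤ | ∃ X₁ ⊆ X, t = |gap A X₁ (X \ X₁) Y|} θ)
    (X' : Finset V) (hX' : X' = X.filter fun x => θ ≤ sVal A x)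
    (g : ℤ) (hg : g = ∑ x ∈ X \ X', sVal A x)
    (b : ℝ) (hb : b = (∑ x ∈ X, ((deg A x : ℝ) - (sVal A x : ℝ))) / 2)
    (ε : ℝ) (hε : 0 < ε) (hdeg : ∀ y ∈ Y, (deg A y : ℝ) ≤ ε ^ 2 * m / 4)
    :
    (∃ V₁ V₂ : Finset V, V₁ ∪ V₂ = Finset.univ ∧ Disjoint V₁ V₂ ∧
        (((d : ℝ) - 1) / (2 * (2 * (d : ℝ) - 1)) - ε) * m ≤
          min (dArcs A V₁ V₂ : ℝ) (dArcs A V₂ V₁ : ℝ)) ∨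
      ∃ k : ℕ, X'.card = 2 * k + 1 ∧
        ∀ v : ℕ → V,
          X' = (Finset.Icc 1 (2 * k + 1)).image v →
          Set.InjOn v ↑(Finset.Icc 1 (2 * k + 1)) →
          (∀ i ∈ Finset.Icc 1 (2 * k + 1), ∀ j ∈ Finset.Icc 1 (2 * k + 1), i ≤ j →
            sVal A (v j) ≤ sVal A (v i)) →
          (d : ℝ) * ((∑ j ∈ Finset.Icc 1 k, (sVal A (v j) : ℝ)) + (g : ℝ)) -
            ((d : ℝ) - 1) * (∑ j ∈ Finset.Icc (k + 1) (2 * k + 1), (sVal A (v j) : ℝ)) +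
            b + (dArcs A Y Y : ℝ) / 2 < 0 := by
  have hd4 : (4 : ℝ) ≤ d := by exact_mod_cast hd
  obtain ⟨⟨X₁, hX₁, hθX₁⟩, hmin⟩ := hθ
  have hθR : (θ : ℝ) = |(gap A X₁ (X \ X₁) Y : ℝ)| := by rw [hθX₁]; push_cast; rfl
  rcases le_or_gt ((2 * (d : ℝ) - 1) * θ) m with hsmall | hlarge
  · left
    obtain ⟨P, hP⟩ := exists_large_cuts A hirr hXY hdXY heX hX₁ hm
      (L := ((d : ℝ) - 1) / (2 * (2 * (d : ℝ) - 1)) * m) hε hdeg (by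
        rw [← hθR, div_mul_eq_mul_div, div_le_div_iff₀ (by linarith) (by norm_num)]
        nlinarith)
    exact ⟨P, Pᶜ, union_compl P, disjoint_compl_right, by rw [sub_mul]; exact hP⟩
  right
  have hlargeZ : (m : ℤ) < (2 * (d : ℤ) - 1) * θ := by exact_mod_cast hlarge
  have hθpos : 0 < θ := by
    by_contra! hc
    have : (2 * (d : ℤ) - 1) * θ ≤ 0 := mul_nonpos_of_nonneg_of_nonpos (by omega) hc
    omega
  have hs2 : ∀ x, sVal A x < 2 * θ := by
    intro x
    have h1 := mul_sVal_le A hout x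
    rw [← hm] at h1
    by_contra! hc
    have h2 : (d : ℤ) * (2 * θ) ≤ d * sVal A x := mul_le_mul_of_nonneg_left hc (by positivity)
    nlinarith
  have hX'X : X' ⊆ X := hX' ▸ filter_subset _ _
  have hg0 : 0 ≤ g := hg ▸ sum_nonneg fun x _ => sVal_nonneg A x
  have hXsum : ∑ x ∈ X, sVal A x = g + ∑ x ∈ X', sVal A x := by
    rw [hg, sum_sdiff hX'X]
  have hX'mem : ∀ x ∈ X', θ ≤ sVal A x := fun x hx => by
    rw [hX'] at hx; exact (mem_filter.mp hx).2
  have hsigned : ∀ P ⊆ X', θ + g ≤ |2 * ∑ x ∈ P, sVal A x - ∑ x ∈ X', sVal A x| := by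
    intro P hP
    rw [hg]
    refine add_sum_le_abs_of_small (sVal A) θ (X \ X') (fun x _ => sVal_nonneg A x) ?_ _ ?_
    · intro x hx
      rw [mem_sdiff, hX', mem_filter] at hx
      by_contra! hc
      exact hx.2 ⟨hx.1, hc⟩
    · intro Q hQ
      have hPQ : Disjoint P Q :=
        disjoint_of_subset_left hP (disjoint_of_subset_right hQ disjoint_sdiff)
      obtain ⟨X₂, hX₂, hgap⟩ := exists_gap_eq A hXY hdXY heX
        (union_subset (hP.trans hX'X) (hQ.trans sdiff_subset))
      have := hmin ⟨X₂, hX₂, rfl⟩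
      rw [hgap, sum_union hPQ, hXsum, hg] at this
      convert this using 2; ring
  have hodd : ∃ k, X'.card = 2 * k + 1 := by
    rcases Nat.even_or_odd' X'.card with ⟨k, hk | hk⟩
    · obtain ⟨P, hP, hlt⟩ := exists_abs_signed_sum_lt_of_even (sVal A) θ hθpos k X' hk
        (fun x hx => ⟨hX'mem x hx, hs2 x⟩)
      have := hsigned P hP
      omega
    · exact ⟨k, hk⟩
  obtain ⟨k, hk⟩ := hodd
  refine ⟨k, hk, fun v hv hinj hanti => ?_⟩
  have himage : ∀ P ⊆ Icc 1 (2 * k + 1),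
      ∑ x ∈ P.image v, sVal A x = ∑ j ∈ P, sVal A (v j) := fun P hP =>
    sum_image (hinj.mono (by exact_mod_cast hP))
  have hwin := le_sum_small_sub_sum_large (fun j => sVal A (v j)) k θ (θ + g) hθpos (by omega)
    (fun j hj => ⟨hX'mem _ (hv ▸ mem_image_of_mem v hj), hs2 _⟩) hanti (by
      intro P hP
      have := hsigned (P.image v) (hv ▸ image_subset_image hP)
      rwa [himage P hP, hv, himage _ subset_rfl] at this)
  have htot : ∑ x ∈ X', sVal A x = ∑ j ∈ Icc 1 k, sVal A (v j) +
      ∑ j ∈ Icc (k + 1) (2 * k + 1), sVal A (v j) := by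
    rw [hv, himage _ subset_rfl]
    exact (sum_Ico_consecutive (fun j => sVal A (v j)) (show 1 ≤ k + 1 by omega)
      (show k + 1 ≤ 2 * k + 2 by omega)).symm
  have hm' : (m : ℝ) = ∑ x ∈ X, (deg A x : ℝ) + dArcs A Y Y := by
    rw [hm, dArcs_univ_eq_sum_deg_add A hXY hdXY heX]; push_cast; rfl
  have hsumR : ∑ x ∈ X, (sVal A x : ℝ) = g + (∑ j ∈ Icc 1 k, (sVal A (v j) : ℝ) +
      ∑ j ∈ Icc (k + 1) (2 * k + 1), (sVal A (v j) : ℝ)) := by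
    rw [htot] at hXsum; exact_mod_cast hXsum
  have hwinR : (θ : ℝ) + g ≤ ∑ j ∈ Icc (k + 1) (2 * k + 1), (sVal A (v j) : ℝ) -
      ∑ j ∈ Icc 1 k, (sVal A (v j) : ℝ) := by exact_mod_cast hwin
  rw [sum_sub_distrib, hsumR] at hb
  have hmul := mul_le_mul_of_nonneg_left hwinR (show (0 : ℝ) ≤ 2 * d - 1 by linarith)
  linarith
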